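/- Let X be a complex Banach space and T a bounded linear operator on X. Then T is almost invertible if and only if 0 ∉ acc^{ω₁} σ(T), where ω₁ is the first uncountable ordinal. -/

import Mathlib

open Ordinal Set

/-- The `α`-th Cantor–Bendixson derivative of a set `A ⊆ ℂ`, defined by transfinite
recursion: `cbd A 0 = A`, `cbd A (β+1) = derivedSet (cbd A β)` (the set of accumulation
points of `cbd A β`), and `cbd A α = ⋂_{β < α} cbd A β` for limit ordinals `α`. -/
noncomputable def cbd (A : Set ℂ) (α : Ordinal) : Set ℂ :=
  Ordinal.limitRecOn α A (fun _ ih => derivedSet ih)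
    (fun α _ ih => ⋂ (β : Set.Iio α), ih β.1 β.2)

variable {X : Type*} [NormedAddCommGroup X] [NormedSpace ℂ X] [CompleteSpace X]

/-- The restriction `T_M` of a bounded operator `T` to a `T`-invariant subspace `M`. -/
noncomputable def restr (T : X →L[ℂ] X) (M : Submodule ℂ X)
    (hM : ∀ x ∈ M, T x ∈ M) : M →L[ℂ] M :=
  { toLinearMap := T.toLinearMap.restrict hM
    cont := (T.continuous.comp continuous_subtype_val).subtype_mk _ }


/-- `T` is almost invertible: there is `(M, N) ∈ Red T` (a pair of closed
`T`-invariant subspaces with `X = M ⊕ N`) such that `T_M` is invertible and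
`σ(T_N)` is at most countable. -/
def AlmostInv (T : X →L[ℂ] X) : Prop :=
  ∃ (M N : Submodule ℂ X) (hM : ∀ x ∈ M, T x ∈ M) (hN : ∀ x ∈ N, T x ∈ N),
    IsClosed (M : Set X) ∧ IsClosed (N : Set X) ∧ IsCompl M N ∧
    IsUnit (restr T M hM) ∧ (spectrum ℂ (restr T N hN)).Countable

/-! Both conditions say that `σ(T)` meets some neighbourhood of `0` in a countable set.

For a closed set `A ⊆ ℂ`, the Lindelöf property makes the decreasing transfinite sequence of
derivatives stabilise before `ω₁`, each step discarding only countably many points. Hence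
`acc^{ω₁} A` is perfect and `A \ acc^{ω₁} A` is countable; since a nonempty perfect set is
uncountable, `z ∉ acc^{ω₁} A` exactly when `A` is countable near `z`.

If `σ(T)` is countable near `0`, only countably many radii are met by it there, so some small circle
around `0` lies in the resolvent set. The Riesz projection `P` over this circle splits
`X = ker P ⊕ range P` with `T` invertible on `ker P`, while the spectrum of `T` on `range P` is the
part of `σ(T)` inside the circle. Conversely `σ(T) = σ(T_M) ∪ σ(T_N)` agrees with `σ(T_N)` near `0`
when `T_M` is invertible. -/

open Topology

section Topology

theorem countable_diff_derivedSet {α : Type*} [TopologicalSpace α] [SecondCountableTopology α]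
    (s : Set α) : (s \ derivedSet s).Countable := by
  have hdiscrete : DiscreteTopology (s \ derivedSet s : Set α) := by
    refine discreteTopology_subtype_iff.2 fun x hx => ?_
    have hisolated : 𝓝[≠] x ⊓ Filter.principal s = ⊥ := Filter.not_neBot.1 hx.2
    exact le_bot_iff.1
      (hisolated ▸ inf_le_inf_left _ (Filter.principal_mono.2 sdiff_subset))
  exact countable_coe_iff.1 (TopologicalSpace.separableSpace_iff_countable.1 inferInstance)

theorem not_countable_of_perfect {α : Type*} [MetricSpace α] [CompleteSpace α] {C : Set α}
    (hC : Perfect C) (hne : C.Nonempty) : ¬ C.Countable := by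
  obtain ⟨f, hfC, -, hf⟩ := hC.exists_nat_bool_injection hne
  intro hcount
  have huncountable : Uncountable (ℕ → Bool) :=
    Cardinal.aleph0_lt_mk_iff.1 (by simp [Cardinal.aleph0_lt_continuum])
  exact not_countable_univ <|
    countable_of_injective_of_countable_image hf.injOn (image_univ ▸ hcount.mono hfC)

theorem not_countable_inter_of_perfect {α : Type*} [MetricSpace α] [CompleteSpace α]
    {C U : Set α} {x : α} (hC : Perfect C) (hx : x ∈ C) (hU : U ∈ 𝓝 x) :
    ¬ (C ∩ U).Countable := by
  obtain ⟨V, ⟨hV, hVclosed⟩, hVU⟩ := (closed_nhds_basis x).mem_iff.1 hU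
  obtain ⟨hperfect, hne⟩ :=
    hC.closure_nhds_inter x hx (mem_interior_iff_mem_nhds.2 hV) isOpen_interior
  have hsub : closure (interior V ∩ C) ⊆ C ∩ U :=
    (closure_minimal (inter_subset_inter_left C interior_subset) (hVclosed.inter hC.closed)).trans
      fun z hz => ⟨hz.2, hVU hz.1⟩
  exact fun hcount => not_countable_of_perfect hperfect hne (hcount.mono hsub)

theorem exists_sphere_subset_compl_of_countable_inter {α : Type*} [PseudoMetricSpace α]
    {K U : Set α} {x : α} (hU : U ∈ 𝓝 x) (hK : (K ∩ U).Countable) :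
    ∃ r > 0, Metric.closedBall x r ⊆ U ∧ Metric.sphere x r ⊆ Kᶜ := by
  obtain ⟨ε, hε, hεU⟩ := Metric.nhds_basis_closedBall.mem_iff.1 hU
  obtain ⟨r, hr, hr0, hrε⟩ := ((hK.image (dist · x)).dense_compl ℝ).exists_between hε
  have hrU : Metric.closedBall x r ⊆ U := (Metric.closedBall_subset_closedBall hrε.le).trans hεU
  exact ⟨r, hr0, hrU, fun z hz hzK =>
    hr ⟨z, ⟨hzK, hrU (Metric.sphere_subset_closedBall hz)⟩, hz⟩⟩

theorem exists_gt_annulus_subset_compl {α : Type*} [PseudoMetricSpace α] {K : Set α}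
    (hK : IsCompact K) {x : α} {r : ℝ} (h : Metric.sphere x r ⊆ Kᶜ) :
    ∃ s > r, Metric.closedBall x s \ Metric.ball x r ⊆ Kᶜ := by
  have hclosed : IsClosed ((dist · x) '' K) :=
    (hK.image (continuous_id.dist continuous_const)).isClosed
  have hr : ((dist · x) '' K)ᶜ ∈ 𝓝 r := hclosed.compl_mem_nhds fun ⟨_, hz, hzr⟩ => h hzr hz
  obtain ⟨s, hrs, hs⟩ := mem_nhdsGE_iff_exists_Icc_subset.1 (mem_nhdsWithin_of_mem_nhds hr)
  exact ⟨s, hrs, fun z hz hzK => hs ⟨not_lt.1 hz.2, hz.1⟩ ⟨z, hzK, rfl⟩⟩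

end Topology

section CantorBendixson

universe u

theorem countable_Iio_of_lt_omega_one {α : Ordinal} (h : α < ω₁) : (Iio α).Countable := by
  rw [← Cardinal.le_aleph0_iff_set_countable, Cardinal.mk_Iio_ordinal, Cardinal.lift_le_aleph0,
    ← Order.lt_succ_iff, Cardinal.succ_aleph0, ← Cardinal.lt_ord, Cardinal.ord_aleph]
  exact h

theorem cbd_zero (A : Set ℂ) : cbd A 0 = A :=
  Ordinal.limitRecOn_zero ..

theorem cbd_add_one (A : Set ℂ) (α : Ordinal) : cbd A (α + 1) = derivedSet (cbd A α) :=
  Ordinal.limitRecOn_add_one ..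

theorem cbd_of_isSuccLimit (A : Set ℂ) {α : Ordinal} (h : Order.IsSuccLimit α) :
    cbd A α = ⋂ β : Iio α, cbd A β :=
  Ordinal.limitRecOn_limit _ _ _ _ h

theorem cbd_omega_one (A : Set ℂ) :
    cbd A (ω₁ : Ordinal.{u}) = ⋂ β : Iio (ω₁ : Ordinal.{u}), cbd A β :=
  cbd_of_isSuccLimit A (Cardinal.isSuccLimit_omega 1)

variable {A : Set ℂ}

theorem isClosed_cbd (hA : IsClosed A) (α : Ordinal) : IsClosed (cbd A α) := by
  induction α using Ordinal.limitRecOn with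
  | zero => rwa [cbd_zero]
  | add_one α _ => exact cbd_add_one A α ▸ isClosed_derivedSet _
  | limit α hα ih => exact cbd_of_isSuccLimit A hα ▸ isClosed_iInter fun β => ih β β.2

theorem antitone_cbd (hA : IsClosed A) : Antitone (cbd A) := by
  intro α β h
  induction β using Ordinal.limitRecOn with
  | zero => rw [nonpos_iff_eq_zero.1 h]
  | add_one β ih =>
    rcases h.lt_or_eq with h | rfl
    · rw [cbd_add_one]
      exact ((isClosed_iff_derivedSet_subset _).1 (isClosed_cbd hA β)).trans
        (ih (Order.lt_add_one_iff.1 h))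
    · rfl
  | limit β hβ _ =>
    rcases h.lt_or_eq with h | rfl
    · rw [cbd_of_isSuccLimit A hβ]
      exact iInter_subset (fun γ : Iio β => cbd A γ) ⟨α, h⟩
    · rfl

theorem countable_diff_cbd_of_lt_omega_one (A : Set ℂ) {α : Ordinal} (h : α < ω₁) :
    (A \ cbd A α).Countable := by
  induction α using Ordinal.limitRecOn with
  | zero => simp [cbd_zero]
  | add_one β ih =>
    have hβ : (A \ cbd A β).Countable := ih ((Order.lt_add_one_iff.2 le_rfl).trans h)
    rw [cbd_add_one]
    exact (hβ.union (countable_diff_derivedSet (cbd A β))).mono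
      (sdiff_triangle A (cbd A β) _)
  | limit β hβ ih =>
    rw [cbd_of_isSuccLimit A hβ, sdiff_iInter]
    have := (countable_Iio_of_lt_omega_one h).to_subtype
    exact countable_iUnion fun γ => ih γ γ.2 (lt_trans γ.2 h)

theorem exists_lt_omega_one_cbd_eq (hA : IsClosed A) :
    ∃ α < (ω₁ : Ordinal.{u}), cbd A α = cbd A (ω₁ : Ordinal.{u}) := by
  obtain ⟨t, ht, hunion⟩ := eq_open_union_countable (fun β : Iio (ω₁ : Ordinal.{u}) => (cbd A β)ᶜ)
    fun β => (isClosed_cbd hA β).isOpen_compl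
  have := ht.to_subtype
  have hsup : ⨆ β : t, (β : Ordinal.{u}) < ω₁ := Ordinal.iSup_lt_omega_one fun β => β.1.2
  refine ⟨_, hsup, (antitone_cbd hA hsup.le).antisymm' ?_⟩
  rw [cbd_omega_one, ← compl_subset_compl, compl_iInter, ← hunion]
  exact iUnion₂_subset fun β hβ =>
    compl_subset_compl.2 <| antitone_cbd hA <|
      Ordinal.le_iSup (fun β : t => (β : Ordinal.{u})) ⟨β, hβ⟩

theorem perfect_cbd_omega_one (hA : IsClosed A) : Perfect (cbd A (ω₁ : Ordinal.{u})) := by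
  obtain ⟨α, hα, hαω⟩ := exists_lt_omega_one_cbd_eq hA
  refine ⟨isClosed_cbd hA _, preperfect_iff_subset_derivedSet.2 ?_⟩
  rw [← hαω, ← cbd_add_one, hαω]
  exact antitone_cbd hA ((Cardinal.isSuccLimit_omega 1).add_one_lt hα).le

theorem countable_diff_cbd_omega_one (hA : IsClosed A) :
    (A \ cbd A (ω₁ : Ordinal.{u})).Countable := by
  obtain ⟨α, hα, hαω⟩ := exists_lt_omega_one_cbd_eq hA
  exact hαω ▸ countable_diff_cbd_of_lt_omega_one A hα

theorem notMem_cbd_omega_one_iff (hA : IsClosed A) {z : ℂ} :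
    z ∉ cbd A (ω₁ : Ordinal.{u}) ↔ ∃ U ∈ 𝓝 z, (A ∩ U).Countable := by
  constructor
  · intro hz
    exact ⟨_, (isClosed_cbd hA _).compl_mem_nhds hz, countable_diff_cbd_omega_one hA⟩
  · rintro ⟨U, hU, hcount⟩ hz
    have hsub : cbd A (ω₁ : Ordinal.{u}) ⊆ A := (antitone_cbd hA zero_le).trans (cbd_zero A).subset
    exact not_countable_inter_of_perfect (perfect_cbd_omega_one hA) hz hU
      (hcount.mono (inter_subset_inter_left U hsub))

end CantorBendixson

section CircleIntegral

variable {E : Type*} [NormedAddCommGroup E] [NormedSpace ℂ E]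

open MeasureTheory in
theorem circleIntegral_circleIntegral_swap {f : ℂ → ℂ → E} {b c : ℂ} {r s : ℝ}
    (hr : 0 ≤ r) (hs : 0 ≤ s)
    (hf : ContinuousOn f.uncurry (Metric.sphere b r ×ˢ Metric.sphere c s)) :
    (∮ w in C(b, r), ∮ z in C(c, s), f w z) = ∮ z in C(c, s), ∮ w in C(b, r), f w z := by
  have hcont : Continuous fun p : ℝ × ℝ => f (circleMap b r p.1) (circleMap c s p.2) :=
    hf.comp_continuous (f := fun p : ℝ × ℝ => (circleMap b r p.1, circleMap c s p.2))
      (by fun_prop) fun p => ⟨circleMap_mem_sphere _ hr _, circleMap_mem_sphere _ hs _⟩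
  simp only [circleIntegral_def_Icc, ← integral_smul, deriv_circleMap]
  rw [integral_integral_swap]
  · simp only [smul_smul, mul_comm]
  · rw [Measure.prod_restrict]
    refine ContinuousOn.integrableOn_compact (isCompact_Icc.prod isCompact_Icc)
      (Continuous.continuousOn ?_)
    exact Continuous.smul (by fun_prop) (Continuous.smul (by fun_prop) hcont)

variable [CompleteSpace E] {F : Type*} [NormedAddCommGroup F] [NormedSpace ℂ F] [CompleteSpace F]

theorem clm_circleIntegral (L : E →L[ℂ] F) {f : ℂ → E} {c : ℂ} {r : ℝ}
    (hf : CircleIntegrable f c r) : L (∮ z in C(c, r), f z) = ∮ z in C(c, r), L (f z) := by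
  simp only [circleIntegral, ← L.intervalIntegral_comp_comm hf.out, map_smul]

theorem continuousOn_inv_sub {w : ℂ} {S : Set ℂ} (hw : w ∉ S) :
    ContinuousOn (fun z => (w - z)⁻¹) S :=
  (continuousOn_const.sub continuousOn_id).inv₀ fun _ hz =>
    sub_ne_zero.2 (ne_of_mem_of_not_mem hz hw).symm

theorem circleIntegral_sub_inv_eq_zero {c w : ℂ} {r : ℝ} (hr : 0 ≤ r)
    (hw : w ∉ Metric.closedBall c r) : (∮ z in C(c, r), (z - w)⁻¹) = 0 := by
  refine DiffContOnCl.circleIntegral_eq_zero hr (DifferentiableOn.diffContOnCl_ball ?_ subset_rfl)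
  exact (differentiableOn_id.sub_const w).inv fun z hz =>
    sub_ne_zero.2 (ne_of_mem_of_not_mem hz hw)

variable {A : Type*} [NormedRing A] [NormedAlgebra ℂ A] [CompleteSpace A] {f : ℂ → A} {c : ℂ}
  {r : ℝ}

theorem mul_circleIntegral (a : A) (hf : CircleIntegrable f c r) :
    a * (∮ z in C(c, r), f z) = ∮ z in C(c, r), a * f z :=
  clm_circleIntegral (ContinuousLinearMap.mul ℂ A a) hf

theorem circleIntegral_mul (a : A) (hf : CircleIntegrable f c r) :
    (∮ z in C(c, r), f z) * a = ∮ z in C(c, r), f z * a :=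
  clm_circleIntegral ((ContinuousLinearMap.mul ℂ A).flip a) hf

theorem commute_circleIntegral {a : A} (hr : 0 ≤ r) (hf : CircleIntegrable f c r)
    (h : ∀ z ∈ Metric.sphere c r, Commute a (f z)) : Commute a (∮ z in C(c, r), f z) := by
  rw [commute_iff_eq, mul_circleIntegral a hf, circleIntegral_mul a hf]
  exact circleIntegral.integral_congr hr h

end CircleIntegral

section Resolvent

theorem commute_resolvent {R A : Type*} [CommSemiring R] [Ring A] [Algebra R A] {a b : A}
    (hab : Commute a b) {z : R} (hz : z ∈ resolventSet R b) : Commute a (resolvent b z) := by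
  have hunit : Commute a (hz.unit : A) := (Algebra.commute_algebraMap_right z a).sub_right hab
  rw [resolvent, Ring.inverse_of_isUnit hz]
  exact hunit.units_inv_right

variable {𝕜 A : Type*} [NontriviallyNormedField 𝕜] [NormedRing A] [NormedAlgebra 𝕜 A]
  [CompleteSpace A]

theorem differentiableOn_resolvent (a : A) :
    DifferentiableOn 𝕜 (resolvent a) (resolventSet 𝕜 a) := fun _ hz =>
  (spectrum.hasDerivAt_resolvent_const_left hz).differentiableAt.differentiableWithinAt

end Resolvent

section RieszProjection

variable {A : Type*} [NormedRing A] [NormedAlgebra ℂ A] {a b : A} {c w : ℂ} {r s : ℝ}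

/-- The Riesz projection of `a` for the part of its spectrum enclosed by the circle `|z - c| = r`,
namely `(2πi)⁻¹ ∮ (z - a)⁻¹ dz`. It is meaningful when the circle avoids the spectrum. -/
noncomputable def rieszProjection (a : A) (c : ℂ) (r : ℝ) : A :=
  (2 * Real.pi * Complex.I : ℂ)⁻¹ • ∮ z in C(c, r), resolvent a z

/-- The Cauchy transform `(2πi)⁻¹ ∮ (w - z)⁻¹ (z - a)⁻¹ dz` of the resolvent over the circle
`|z - c| = r`. It inverts `w - a` on the range of the Riesz projection when `w` lies outside the
circle, and up to sign on the kernel when `w` lies inside. -/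
noncomputable def resolventCauchyTransform (a : A) (c : ℂ) (r : ℝ) (w : ℂ) : A :=
  (2 * Real.pi * Complex.I : ℂ)⁻¹ • ∮ z in C(c, r), (w - z)⁻¹ • resolvent a z

variable [CompleteSpace A]

theorem circleIntegrable_resolvent (hr : 0 ≤ r) (h : Metric.sphere c r ⊆ resolventSet ℂ a) :
    CircleIntegrable (resolvent a) c r :=
  ((differentiableOn_resolvent a).continuousOn.mono h).circleIntegrable hr

theorem circleIntegrable_inv_sub_smul_resolvent (hr : 0 ≤ r)
    (h : Metric.sphere c r ⊆ resolventSet ℂ a) (hw : w ∉ Metric.sphere c r) :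
    CircleIntegrable (fun z => (w - z)⁻¹ • resolvent a z) c r :=
  ((continuousOn_inv_sub hw).smul
    ((differentiableOn_resolvent a).continuousOn.mono h)).circleIntegrable hr

theorem commute_rieszProjection (hr : 0 ≤ r) (h : Metric.sphere c r ⊆ resolventSet ℂ a)
    (hb : Commute b a) : Commute b (rieszProjection a c r) :=
  (commute_circleIntegral hr (circleIntegrable_resolvent hr h) fun _ hz =>
    commute_resolvent hb (h hz)).smul_right _

theorem commute_resolventCauchyTransform (hr : 0 ≤ r) (h : Metric.sphere c r ⊆ resolventSet ℂ a)
    (hw : w ∉ Metric.sphere c r) (hb : Commute b a) :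
    Commute b (resolventCauchyTransform a c r w) :=
  (commute_circleIntegral hr (circleIntegrable_inv_sub_smul_resolvent hr h hw) fun _ hz =>
    (commute_resolvent hb (h hz)).smul_right _).smul_right _

theorem sub_mul_resolventCauchyTransform (hr : 0 ≤ r) (h : Metric.sphere c r ⊆ resolventSet ℂ a)
    (hw : w ∉ Metric.sphere c r) :
    (algebraMap ℂ A w - a) * resolventCauchyTransform a c r w =
      rieszProjection a c r -
        ((2 * Real.pi * Complex.I : ℂ)⁻¹ * ∮ z in C(c, r), (z - w)⁻¹) • 1 := by
  have hintegrand : ∀ z ∈ Metric.sphere c r,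
      (algebraMap ℂ A w - a) * (w - z)⁻¹ • resolvent a z =
        resolvent a z - (z - w)⁻¹ • (1 : A) := by
    intro z hz
    have hwz : w - z ≠ 0 := sub_ne_zero.2 (ne_of_mem_of_not_mem hz hw).symm
    have hsplit : (algebraMap ℂ A w - a) * resolvent a z = (w - z) • resolvent a z + 1 := by
      rw [← Ring.mul_inverse_cancel _ (h hz), ← resolvent, Algebra.smul_def, ← add_mul, map_sub,
        sub_add_sub_cancel]
    rw [mul_smul_comm, hsplit, smul_add, smul_smul, inv_mul_cancel₀ hwz, one_smul,
      ← neg_sub z w, inv_neg, neg_smul, ← sub_eq_add_neg]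
  have hkernel : CircleIntegrable (fun z => (z - w)⁻¹ • (1 : A)) c r :=
    (circleIntegrable_sub_inv_iff.2 (.inr (by rwa [abs_of_nonneg hr]))).smul_continuousOn
      continuousOn_const
  rw [resolventCauchyTransform, mul_smul_comm,
    mul_circleIntegral _ (circleIntegrable_inv_sub_smul_resolvent hr h hw),
    circleIntegral.integral_congr hr hintegrand, circleIntegral.integral_sub
      (circleIntegrable_resolvent hr h) hkernel,
    circleIntegral.integral_smul_const, smul_sub, smul_smul, rieszProjection]

theorem sub_mul_resolventCauchyTransform_of_mem_ball
    (h : Metric.sphere c r ⊆ resolventSet ℂ a) (hw : w ∈ Metric.ball c r) :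
    (algebraMap ℂ A w - a) * resolventCauchyTransform a c r w = rieszProjection a c r - 1 := by
  rw [sub_mul_resolventCauchyTransform (Metric.pos_of_mem_ball hw).le h
      fun hmem => (Metric.mem_ball.1 hw).ne hmem,
    circleIntegral.integral_sub_inv_of_mem_ball hw,
    inv_mul_cancel₀ Complex.two_pi_I_ne_zero, one_smul]

theorem sub_mul_resolventCauchyTransform_of_notMem_closedBall (hr : 0 ≤ r)
    (h : Metric.sphere c r ⊆ resolventSet ℂ a) (hw : w ∉ Metric.closedBall c r) :
    (algebraMap ℂ A w - a) * resolventCauchyTransform a c r w = rieszProjection a c r := by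
  rw [sub_mul_resolventCauchyTransform hr h fun hmem => hw (Metric.sphere_subset_closedBall hmem),
    circleIntegral_sub_inv_eq_zero hr hw, mul_zero, zero_smul, _root_.sub_zero]

theorem rieszProjection_eq_of_annulus_subset_resolventSet (hr : 0 < r) (hrs : r ≤ s)
    (h : Metric.closedBall c s \ Metric.ball c r ⊆ resolventSet ℂ a) :
    rieszProjection a c s = rieszProjection a c r := by
  have hdiff : DifferentiableOn ℂ (resolvent a) (resolventSet ℂ a) := differentiableOn_resolvent a
  rw [rieszProjection, rieszProjection,
    Complex.circleIntegral_eq_of_differentiable_on_annulus_off_countable hr hrs countable_empty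
      (hdiff.continuousOn.mono h) fun z hz => hdiff.differentiableAt
        ((spectrum.isOpen_resolventSet a).mem_nhds (h ⟨Metric.ball_subset_closedBall hz.1.1,
          fun hz' => hz.1.2 (Metric.ball_subset_closedBall hz')⟩))]

theorem resolvent_mul_rieszProjection (hr : 0 ≤ r) (h : Metric.sphere c r ⊆ resolventSet ℂ a)
    (hw : w ∉ Metric.closedBall c r) (hwa : w ∈ resolventSet ℂ a) :
    resolvent a w * rieszProjection a c r = resolventCauchyTransform a c r w := by
  rw [← sub_mul_resolventCauchyTransform_of_notMem_closedBall hr h hw, ← mul_assoc, resolvent,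
    Ring.inverse_mul_cancel _ hwa, one_mul]

theorem circleIntegral_resolventCauchyTransform (hr : 0 ≤ r) (hrs : r < s)
    (h : Metric.sphere c r ⊆ resolventSet ℂ a) :
    (∮ w in C(c, s), resolventCauchyTransform a c r w) = ∮ z in C(c, r), resolvent a z := by
  have hcont : ContinuousOn (fun w z => (w - z)⁻¹ • resolvent a z).uncurry
      (Metric.sphere c s ×ˢ Metric.sphere c r) := by
    refine ContinuousOn.smul (ContinuousOn.inv₀ (by fun_prop) ?_)
      (((differentiableOn_resolvent a).continuousOn.mono h).comp continuousOn_snd fun p hp => hp.2)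
    rintro ⟨w, z⟩ ⟨hw, hz⟩ hwz
    exact hrs.ne (hz.symm.trans (sub_eq_zero.1 hwz ▸ hw))
  have hinner : ∀ z ∈ Metric.sphere c r, (∮ w in C(c, s), (w - z)⁻¹ • resolvent a z) =
      (2 * Real.pi * Complex.I : ℂ) • resolvent a z := fun z hz => by
    rw [circleIntegral.integral_smul_const, circleIntegral.integral_sub_inv_of_mem_ball
      (Metric.closedBall_subset_ball hrs (Metric.sphere_subset_closedBall hz))]
  simp only [resolventCauchyTransform, circleIntegral.integral_smul]
  rw [circleIntegral_circleIntegral_swap (hr.trans hrs.le) hr hcont,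
    circleIntegral.integral_congr hr hinner, circleIntegral.integral_smul,
    inv_smul_smul₀ Complex.two_pi_I_ne_zero]

theorem isIdempotentElem_rieszProjection (hr : 0 < r) (h : Metric.sphere c r ⊆ resolventSet ℂ a) :
    IsIdempotentElem (rieszProjection a c r) := by
  obtain ⟨s, hrs, hs⟩ := exists_gt_annulus_subset_compl (spectrum.isCompact a)
    (h.trans (compl_compl _).superset)
  have hannulus : Metric.closedBall c s \ Metric.ball c r ⊆ resolventSet ℂ a :=
    hs.trans (compl_compl _).subset
  have hsphere : Metric.sphere c s ⊆ resolventSet ℂ a := fun w hw =>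
    hannulus ⟨Metric.sphere_subset_closedBall hw,
      fun hw' => ((Metric.mem_ball.1 hw').trans hrs).ne hw⟩
  have hs0 : 0 ≤ s := hr.le.trans hrs.le
  have houter : ∀ w ∈ Metric.sphere c s,
      resolvent a w * rieszProjection a c r = resolventCauchyTransform a c r w := fun w hw =>
    resolvent_mul_rieszProjection hr.le h
      (fun hw' => (hrs.trans_eq hw.symm).not_ge (Metric.mem_closedBall.1 hw')) (hsphere hw)
  calc rieszProjection a c r * rieszProjection a c r
      = rieszProjection a c s * rieszProjection a c r := by
        rw [rieszProjection_eq_of_annulus_subset_resolventSet hr hrs.le hannulus]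
    _ = (2 * Real.pi * Complex.I : ℂ)⁻¹ •
          ∮ w in C(c, s), resolvent a w * rieszProjection a c r := by
        rw [rieszProjection, smul_mul_assoc,
          circleIntegral_mul _ (circleIntegrable_resolvent hs0 hsphere)]
    _ = rieszProjection a c r := by
        rw [circleIntegral.integral_congr hs0 houter,
          circleIntegral_resolventCauchyTransform hr.le hrs h, ← rieszProjection]

end RieszProjection

section Restriction

variable {E : Type*} [NormedAddCommGroup E] [NormedSpace ℂ E] {T B : E →L[ℂ] E}
  {M N : Submodule ℂ E}

theorem algebraMap_sub_apply_mem (hM : ∀ x ∈ M, T x ∈ M) (w : ℂ) :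
    ∀ x ∈ M, (algebraMap ℂ (E →L[ℂ] E) w - T) x ∈ M := fun x hx =>
  M.sub_mem (M.smul_mem w hx) (hM x hx)

theorem restr_algebraMap_sub (hM : ∀ x ∈ M, T x ∈ M) (w : ℂ) :
    restr (algebraMap ℂ (E →L[ℂ] E) w - T) M (algebraMap_sub_apply_mem hM w) =
      algebraMap ℂ (M →L[ℂ] M) w - restr T M hM :=
  rfl

theorem mem_resolventSet_restr (hTB : Commute T B) (hTM : ∀ x ∈ M, T x ∈ M)
    (hBM : ∀ x ∈ M, B x ∈ M) {w : ℂ}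
    (h : ∀ x ∈ M, (algebraMap ℂ (E →L[ℂ] E) w - T) (B x) = x) :
    w ∈ resolventSet ℂ (restr T M hTM) := by
  have hcomm : Commute (algebraMap ℂ (E →L[ℂ] E) w - T) B :=
    (Algebra.commute_algebraMap_left w B).sub_left hTB
  rw [spectrum.mem_resolventSet_iff, ← restr_algebraMap_sub]
  refine ⟨⟨restr _ M (algebraMap_sub_apply_mem hTM w), restr B M hBM,
    ContinuousLinearMap.ext fun x => Subtype.ext (h x x.2),
    ContinuousLinearMap.ext fun x => Subtype.ext ?_⟩, rfl⟩
  exact (DFunLike.congr_fun hcomm.eq (x : E)).symm.trans (h x x.2)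

theorem bijective_iff_restr (hMN : IsCompl M N) (hM : ∀ x ∈ M, T x ∈ M) (hN : ∀ x ∈ N, T x ∈ N) :
    Function.Bijective T ↔
      Function.Bijective (restr T M hM) ∧ Function.Bijective (restr T N hN) := by
  let e : (M × N) ≃ₗ[ℂ] E := M.prodEquivOfIsCompl N hMN
  have hconj : T ∘ e = e ∘ Prod.map (restr T M hM) (restr T N hN) :=
    funext fun x => map_add T (x.1 : E) x.2
  rw [← Prod.map_bijective, ← e.bijective.of_comp_iff T, hconj, e.bijective.of_comp_iff']

theorem spectrum_eq_union_restr [CompleteSpace E] (hMN : IsCompl M N)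
    (hMclosed : IsClosed (M : Set E)) (hNclosed : IsClosed (N : Set E))
    (hM : ∀ x ∈ M, T x ∈ M) (hN : ∀ x ∈ N, T x ∈ N) :
    spectrum ℂ T = spectrum ℂ (restr T M hM) ∪ spectrum ℂ (restr T N hN) := by
  have := hMclosed.completeSpace_coe
  have := hNclosed.completeSpace_coe
  ext w
  rw [mem_union, spectrum.mem_iff, spectrum.mem_iff, spectrum.mem_iff, ← not_and_or,
    ← restr_algebraMap_sub, ← restr_algebraMap_sub, ContinuousLinearMap.isUnit_iff_bijective,
    ContinuousLinearMap.isUnit_iff_bijective, ContinuousLinearMap.isUnit_iff_bijective,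
    bijective_iff_restr hMN]

end Restriction

section AlmostInvertible

variable {E : Type*} [NormedAddCommGroup E] [NormedSpace ℂ E] [CompleteSpace E] {T : E →L[ℂ] E}
  {c : ℂ} {r : ℝ}

theorem apply_mem_range_rieszProjection {B : E →L[ℂ] E} (hr : 0 ≤ r)
    (h : Metric.sphere c r ⊆ resolventSet ℂ T) (hB : Commute B T) :
    ∀ x ∈ (rieszProjection T c r).range, B x ∈ (rieszProjection T c r).range := by
  rintro _ ⟨y, rfl⟩
  exact ⟨B y, (DFunLike.congr_fun (commute_rieszProjection hr h hB).eq y).symm⟩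

theorem apply_mem_ker_rieszProjection {B : E →L[ℂ] E} (hr : 0 ≤ r)
    (h : Metric.sphere c r ⊆ resolventSet ℂ T) (hB : Commute B T) :
    ∀ x ∈ (rieszProjection T c r).ker, B x ∈ (rieszProjection T c r).ker := fun x hx =>
  (DFunLike.congr_fun (commute_rieszProjection hr h hB).eq x).symm.trans
    ((congrArg B hx).trans (map_zero B))

theorem spectrum_restr_range_rieszProjection_subset (hr : 0 < r)
    (h : Metric.sphere c r ⊆ resolventSet ℂ T) :
    spectrum ℂ (restr T (rieszProjection T c r).range
      (apply_mem_range_rieszProjection hr.le h (Commute.refl T))) ⊆ Metric.closedBall c r := by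
  refine compl_subset_comm.1 fun w hw => ?_
  have hcomm : Commute T (resolventCauchyTransform T c r w) :=
    commute_resolventCauchyTransform hr.le h
      (fun hw' => hw (Metric.sphere_subset_closedBall hw')) (Commute.refl T)
  refine mem_resolventSet_restr hcomm _ (apply_mem_range_rieszProjection hr.le h hcomm.symm) ?_
  rintro _ ⟨y, rfl⟩
  exact (DFunLike.congr_fun
    (sub_mul_resolventCauchyTransform_of_notMem_closedBall hr.le h hw) _).trans
    (DFunLike.congr_fun (isIdempotentElem_rieszProjection hr h).eq y)

theorem spectrum_restr_ker_rieszProjection_subset (hr : 0 ≤ r)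
    (h : Metric.sphere c r ⊆ resolventSet ℂ T) :
    spectrum ℂ (restr T (rieszProjection T c r).ker
      (apply_mem_ker_rieszProjection hr h (Commute.refl T))) ⊆ (Metric.ball c r)ᶜ := by
  refine compl_subset_compl.2 fun w hw => ?_
  have hcomm : Commute T (-resolventCauchyTransform T c r w) :=
    (commute_resolventCauchyTransform hr h
      (fun hw' => (Metric.mem_ball.1 hw).ne hw') (Commute.refl T)).neg_right
  refine mem_resolventSet_restr hcomm _ (apply_mem_ker_rieszProjection hr h hcomm.symm)
    fun x hx => ?_
  have hinverse : (algebraMap ℂ (E →L[ℂ] E) w - T) * -resolventCauchyTransform T c r w =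
      1 - rieszProjection T c r := by
    rw [mul_neg, sub_mul_resolventCauchyTransform_of_mem_ball h hw, neg_sub]
  calc (algebraMap ℂ (E →L[ℂ] E) w - T) ((-resolventCauchyTransform T c r w) x)
      = x - rieszProjection T c r x := DFunLike.congr_fun hinverse x
    _ = x := sub_eq_self.2 hx

theorem almostInv_of_sphere_subset_resolventSet (hr : 0 < r)
    (h : Metric.sphere 0 r ⊆ resolventSet ℂ T)
    (hcount : (spectrum ℂ T ∩ Metric.closedBall 0 r).Countable) : AlmostInv T := by
  have hcompl := (ContinuousLinearMap.IsIdempotentElem.isTopCompl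
    (isIdempotentElem_rieszProjection hr h)).symm
  have hker := apply_mem_ker_rieszProjection hr.le h (Commute.refl T)
  have hrange := apply_mem_range_rieszProjection hr.le h (Commute.refl T)
  refine ⟨_, _, hker, hrange, hcompl.isClosed, hcompl.isClosed', hcompl.isCompl, ?_, ?_⟩
  · exact spectrum.isUnit_of_zero_notMem ℂ fun h0 =>
      spectrum_restr_ker_rieszProjection_subset hr.le h h0 (Metric.mem_ball_self hr)
  · refine hcount.mono (subset_inter ?_ (spectrum_restr_range_rieszProjection_subset hr h))
    rw [spectrum_eq_union_restr hcompl.isCompl hcompl.isClosed hcompl.isClosed' hker hrange]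
    exact subset_union_right

end AlmostInvertible

/-- `T` is almost invertible iff `0 ∉ acc^{ω₁} σ(T)`. -/
theorem almostInv_iff_not_mem_cbd_omega1 (T : X →L[ℂ] X) :
    AlmostInv T ↔ (0 : ℂ) ∉ cbd (spectrum ℂ T) ω₁ := by
  rw [notMem_cbd_omega_one_iff (spectrum.isClosed T)]
  constructor
  · rintro ⟨M, N, hM, hN, hMclosed, hNclosed, hMN, hunit, hcount⟩
    have := hMclosed.completeSpace_coe
    have hU : (spectrum ℂ (restr T M hM))ᶜ ∈ 𝓝 0 :=
      (spectrum.isClosed (𝕜 := ℂ) (restr T M hM)).compl_mem_nhds (spectrum.zero_notMem ℂ hunit)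
    refine ⟨_, hU, hcount.mono ?_⟩
    rw [spectrum_eq_union_restr hMN hMclosed hNclosed hM hN]
    exact fun w ⟨hw, hwM⟩ => hw.resolve_left hwM
  · rintro ⟨U, hU, hcount⟩
    obtain ⟨r, hr, hrU, hsphere⟩ := exists_sphere_subset_compl_of_countable_inter hU hcount
    exact almostInv_of_sphere_subset_resolventSet hr (hsphere.trans (compl_compl _).subset)
      (hcount.mono (inter_subset_inter_right _ hrU))
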